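/- arXiv:1801.08112 — 3 statements merged into one kernel-verified Lean document; each statement's English description precedes it below -/
import Mathlib

section
/- Let s, N be natural numbers and let P ∈ ℂ[θ₁,…,θ_s, u₀,…,u_N] be a nonzero polynomial. Then there exist a nonzero polynomial R ∈ ℂ[θ₁,…,θ_s], a natural number h, and a nonzero polynomial W ∈ ℂ[u₀,…,u_h] such that: for every θ̂ ∈ ℂ^s with R(θ̂) ≠ 0 and every function û : ℂ → ℂ that is complex analytic in a neighborhood of 0 and satisfies W(û(0), û'(0), …, û^{(h)}(0)) ≠ 0, the function t ↦ P(θ̂₁,…,θ̂_s, û(t), û'(t), …, û^{(N)}(t)) does not vanish identically on any neighborhood of 0 (equivalently, it is a nonzero germ of an analytic function at 0). -/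
open MvPolynomial

/-!
Write `P = ∑ⱼ cⱼ(θ) mⱼ(u)` with distinct monomials `mⱼ` in `u₀, u₁, …`, and take for `R` one of the
nonzero coefficients `cⱼ`. If `t ↦ ∑ⱼ cⱼ(θ) mⱼ(û(t), û'(t), …)` vanishes near a point, so do all its
derivatives; with `D` the total derivative `uᵢ ↦ uᵢ₊₁`, the vector `(cⱼ(θ))ⱼ` is then killed by
every row `((Dᵏ mⱼ)(û, û', …))ⱼ`. So one may take `W = det (D^{kᵢ} mⱼ)`, a generalized Wronskian,
for any orders `kᵢ` that make it a nonzero polynomial.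

Such orders exist as soon as the sequences `k ↦ (Dᵏ mⱼ)(a)` are linearly independent for a single
jet `a`. The jet at `0` of `f = ∑ᵢ exp (lᵢ X)` has this property when the `lᵢ` are linearly
independent over `ℕ`: the monomials in the exponentials are then eigenvectors of `d/dX` with
distinct eigenvalues, so the exponentials are algebraically independent, and the derivatives of `f`
are obtained from them by an invertible Vandermonde matrix.
-/

/-- The total derivative on the ring of differential polynomials in one differential indeterminate:
the variable `X i` stands for the `i`-th derivative of the indeterminate. -/
noncomputable def totalDeriv (R : Type*) [CommSemiring R] :
    Derivation R (MvPolynomial ℕ R) (MvPolynomial ℕ R) :=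
  mkDerivation R fun i => X (i + 1)

lemma totalDeriv_X {R : Type*} [CommSemiring R] (i : ℕ) : totalDeriv R (X i) = X (i + 1) :=
  mkDerivation_X ..

lemma eval_iterate_totalDeriv_sum_smul {R J : Type*} [CommSemiring R] [Fintype J] (a : ℕ → R)
    (k : ℕ) (c : J → R) (q : J → MvPolynomial ℕ R) :
    eval a ((totalDeriv R)^[k] (∑ j, c j • q j))
      = ∑ j, c j * eval a ((totalDeriv R)^[k] (q j)) := by
  have hpow (p : MvPolynomial ℕ R) :
      (totalDeriv R)^[k] p = ((totalDeriv R : Module.End R (MvPolynomial ℕ R)) ^ k) p :=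
    (Module.End.pow_apply ..).symm
  simp only [hpow, map_sum, map_smul, smul_eval]

section Derivation

variable {R A ι : Type*} [CommSemiring R] [CommSemiring A] [Algebra R A] (δ : Derivation R A A)

lemma aeval_totalDeriv (f : A) (q : MvPolynomial ℕ R) :
    aeval (fun i => δ^[i] f) (totalDeriv R q) = δ (aeval (fun i => δ^[i] f) q) := by
  induction q using MvPolynomial.induction_on with
  | C r => simp [totalDeriv]
  | add p q hp hq => simp only [map_add, hp, hq]
  | mul_X p i hp =>
    simp only [Derivation.leibniz, map_add, map_mul, smul_eq_mul, aeval_X, hp, totalDeriv_X,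
      Function.iterate_succ_apply']

lemma aeval_iterate_totalDeriv (f : A) (k : ℕ) (q : MvPolynomial ℕ R) :
    aeval (fun i => δ^[i] f) ((totalDeriv R)^[k] q) = δ^[k] (aeval (fun i => δ^[i] f) q) :=
  Function.Semiconj.iterate_right (f := aeval fun i => δ^[i] f) (aeval_totalDeriv δ f) k q

variable {δ} {x : ι → A} {l : ι → R}

lemma derivation_finsuppProd_pow (hx : ∀ i, δ (x i) = l i • x i) (e : ι →₀ ℕ) :
    δ (e.prod fun i m => x i ^ m) = Finsupp.weight l e • e.prod fun i m => x i ^ m := by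
  induction e using Finsupp.induction_linear with
  | zero => simp
  | add e f he hf =>
    have hadd : ((e + f).prod fun i m => x i ^ m)
        = (e.prod fun i m => x i ^ m) * f.prod fun i m => x i ^ m :=
      Finsupp.prod_add_index' (fun _ => pow_zero _) fun _ => pow_add _
    rw [hadd, δ.leibniz, he, hf, map_add, smul_comm, smul_eq_mul, smul_comm, smul_eq_mul,
      mul_comm (f.prod _), ← add_smul, add_comm]
  | single i m =>
    have hsingle : ((Finsupp.single i m).prod fun i m => x i ^ m) = x i ^ m :=
      Finsupp.prod_single_index (pow_zero _)
    rw [hsingle, Finsupp.weight_single, δ.leibniz_pow, hx]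
    cases m with
    | zero => simp
    | succ m => simp only [Nat.add_sub_cancel, pow_succ, smul_eq_mul, mul_smul_comm, smul_assoc]

end Derivation

lemma algebraicIndependent_of_derivation_eq_smul {R A ι : Type*} [CommRing R] [IsDomain R]
    [CommRing A] [IsDomain A] [Algebra R A] [Module.IsTorsionFree R A] {δ : Derivation R A A}
    {x : ι → A} {l : ι → R} (hx : ∀ i, δ (x i) = l i • x i) (hx0 : ∀ i, x i ≠ 0)
    (hl : LinearIndependent ℕ l) : AlgebraicIndependent R x := by
  have hmonomials : LinearIndependent R fun e : ι →₀ ℕ => e.prod fun i m => x i ^ m :=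
    Module.End.eigenvectors_linearIndependent' (δ : A →ₗ[R] A) (Finsupp.weight l) hl _ fun e =>
      ⟨Module.End.mem_eigenspace_iff.mpr (derivation_finsuppProd_pow hx e),
        Finset.prod_ne_zero_iff.mpr fun i _ => pow_ne_zero _ (hx0 i)⟩
  refine algebraicIndependent_iff.mpr fun p hp => ?_
  rw [aeval_def, eval₂_eq] at hp
  simp only [← Algebra.smul_def] at hp
  ext e
  by_contra he
  exact he (linearIndependent_iff'.mp hmonomials p.support _ hp e (mem_support_iff.mpr he))

lemma algebraicIndependent_sum_smul_of_isUnit_det {R A ι : Type*} [CommRing R] [CommRing A]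
    [Algebra R A] [Fintype ι] [DecidableEq ι] {x : ι → A} (hx : AlgebraicIndependent R x)
    {M : Matrix ι ι R} (hM : IsUnit M.det) :
    AlgebraicIndependent R fun i => ∑ j, M i j • x j := by
  have hcomp : aeval (fun i => ∑ j, M i j • x j) = (aeval x).comp (bind₁ M.toMvPolynomial) := by
    ext i
    simp [Matrix.toMvPolynomial, aeval_monomial, Algebra.smul_def]
  have hinv : Function.LeftInverse (bind₁ M⁻¹.toMvPolynomial) (bind₁ M.toMvPolynomial) :=
    fun p => by simp [bind₁_bind₁, ← Matrix.toMvPolynomial_mul, Matrix.mul_nonsing_inv _ hM]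
  rw [AlgebraicIndependent, hcomp]
  exact Function.Injective.comp (g := aeval x) hx hinv.injective

section GenericJet

open PowerSeries (exp rescale derivative)

lemma derivative_rescale_exp {R : Type*} [CommRing R] [Algebra ℚ R] (r : R) :
    derivative R (rescale r (exp R)) = r • rescale r (exp R) := by
  ext k
  have hexp := congrArg (PowerSeries.coeff k) (PowerSeries.derivative_exp R)
  rw [PowerSeries.coeff_derivative] at hexp
  simp only [PowerSeries.coeff_derivative, PowerSeries.coeff_rescale, map_smul, smul_eq_mul, ← hexp]
  ring

lemma iterate_derivative_sum_rescale_exp {R ι : Type*} [CommRing R] [Algebra ℚ R] [Fintype ι]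
    (l : ι → R) (k : ℕ) :
    (derivative R)^[k] (∑ i, rescale (l i) (exp R)) = ∑ i, l i ^ k • rescale (l i) (exp R) := by
  induction k with
  | zero => simp
  | succ k ih =>
    simp only [Function.iterate_succ_apply', ih, map_sum, Derivation.map_smul,
      derivative_rescale_exp, smul_smul, pow_succ]

variable (K : Type*) [Field K] [CharZero K] [Uncountable K] (n : ℕ)

lemma exists_linearIndependent_nat : ∃ l : Fin n → K, LinearIndependent ℕ l := by
  have hrank : (n : Cardinal) ≤ Module.rank ℚ K := by
    rw [Module.Free.rank_eq_mk_of_infinite_lt ℚ K (by simp)]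
    exact Cardinal.natCast_le_aleph0.trans Cardinal.aleph0_lt_mk.le
  obtain ⟨l, hl⟩ := exists_linearIndependent_of_le_rank hrank
  exact ⟨l, hl.restrict_scalars' ℕ⟩

lemma exists_algebraicIndependent_iterate_derivative :
    ∃ f : PowerSeries K, AlgebraicIndependent K fun i : Fin n => (derivative K)^[i] f := by
  obtain ⟨l, hl⟩ := exists_linearIndependent_nat K n
  have hexp : AlgebraicIndependent K fun i => rescale (l i) (exp K) :=
    algebraicIndependent_of_derivation_eq_smul (fun i => derivative_rescale_exp (l i))
      (fun i h => by simpa [PowerSeries.coeff_rescale] using congrArg (PowerSeries.coeff 0) h) hl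
  have hdet : IsUnit (Matrix.vandermonde l).transpose.det := by
    rw [Matrix.det_transpose, isUnit_iff_ne_zero]
    exact Matrix.det_vandermonde_ne_zero_iff.mpr hl.injective
  refine ⟨∑ i, rescale (l i) (exp K), ?_⟩
  simp only [iterate_derivative_sum_rescale_exp]
  exact algebraicIndependent_sum_smul_of_isUnit_det hexp hdet

lemma exists_generic_jet :
    ∃ a : ℕ → K, ∀ q : MvPolynomial (Fin n) K,
      (∀ k, eval a ((totalDeriv K)^[k] (rename Fin.val q)) = 0) → q = 0 := by
  obtain ⟨f, hf⟩ := exists_algebraicIndependent_iterate_derivative K n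
  let F (i : ℕ) : PowerSeries K := (derivative K)^[i] f
  refine ⟨fun i => PowerSeries.constantCoeff (F i), fun q hq => ?_⟩
  suffices hqF : aeval F (rename Fin.val q) = 0 by
    rw [aeval_rename] at hqF
    exact (map_eq_zero_iff _ hf).mp hqF
  ext k
  have hcoeff : (k.factorial : K) * PowerSeries.coeff k (aeval F (rename Fin.val q)) = 0 := calc
    _ = PowerSeries.constantCoeff (aeval F ((totalDeriv K)^[k] (rename Fin.val q))) := by
      rw [aeval_iterate_totalDeriv, PowerSeries.constantCoeff_iterate_derivative]
    _ = eval (fun i => PowerSeries.constantCoeff (F i))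
          ((totalDeriv K)^[k] (rename Fin.val q)) := by
      rw [aeval_def, hom_eval₂]
      rfl
    _ = 0 := hq k
  simpa [k.factorial_ne_zero] using hcoeff

end GenericJet

section GeneralizedWronskian

variable {R J : Type*} [CommRing R] [Fintype J]

/-- The generalized Wronskian of a finite family `q` of differential polynomials, with rows the
total derivatives of orders `k i`; the classical Wronskian has `k = 0, 1, 2, …`. -/
noncomputable def generalizedWronskian [DecidableEq J] (q : J → MvPolynomial ℕ R) (k : J → ℕ) :
    MvPolynomial ℕ R :=
  (Matrix.of fun i j => (totalDeriv R)^[k i] (q j)).det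

lemma eval_generalizedWronskian [DecidableEq J] (a : ℕ → R) (q : J → MvPolynomial ℕ R)
    (k : J → ℕ) : eval a (generalizedWronskian q k)
      = (Matrix.of fun i j => eval a ((totalDeriv R)^[k i] (q j))).det :=
  RingHom.map_det ..

lemma exists_det_ne_zero_of_linearIndependent {K ι : Type*} [Field K] [DecidableEq J]
    {v : J → ι → K} (hv : LinearIndependent K v) :
    ∃ k : J → ι, (Matrix.of fun i j => v j (k i)).det ≠ 0 := by
  obtain ⟨κ, k, -, hspan, hli⟩ := exists_linearIndependent' K (flip v)
  rw [span_flip_eq_top_iff_linearIndependent.mpr hv] at hspan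
  let e : J ≃ κ := (Pi.basisFun K J).indexEquiv (Module.Basis.mk hli hspan.ge)
  refine ⟨k ∘ e, ?_⟩
  have hrows : LinearIndependent K (Matrix.of fun i j => v j ((k ∘ e) i)).row :=
    hli.comp e e.injective
  rw [Matrix.linearIndependent_rows_iff_isUnit, Matrix.isUnit_iff_isUnit_det] at hrows
  exact hrows.ne_zero

lemma exists_generalizedWronskian_ne_zero {K : Type*} [Field K] [CharZero K] [Uncountable K]
    [DecidableEq J] {n : ℕ} {q : J → MvPolynomial (Fin n) K} (hq : LinearIndependent K q) :
    ∃ k, generalizedWronskian (fun j => rename Fin.val (q j)) k ≠ 0 := by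
  obtain ⟨a, ha⟩ := exists_generic_jet K n
  have hv : LinearIndependent K fun j i => eval a ((totalDeriv K)^[i] (rename Fin.val (q j))) := by
    rw [Fintype.linearIndependent_iff] at hq ⊢
    refine fun c hc => hq c (ha _ fun k => ?_)
    simp only [map_sum, map_smul, eval_iterate_totalDeriv_sum_smul]
    simpa using congrFun hc k
  obtain ⟨k, hk⟩ := exists_det_ne_zero_of_linearIndependent hv
  refine ⟨k, fun h0 => hk ?_⟩
  rw [← eval_generalizedWronskian, h0, map_zero]

end GeneralizedWronskian

section Jet

open Topology

variable {𝕜 : Type*} [NontriviallyNormedField 𝕜]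

/-- The infinite jet of `u` at `t`, as values for the variables of a differential polynomial. -/
noncomputable def jet (u : 𝕜 → 𝕜) (t : 𝕜) : ℕ → 𝕜 :=
  fun i => iteratedDeriv i u t

variable [CompleteSpace 𝕜] {u : 𝕜 → 𝕜} {x : 𝕜}

lemma hasDerivAt_jet (hu : AnalyticAt 𝕜 u x) (i : ℕ) :
    HasDerivAt (fun t => jet u t i) (jet u x (i + 1)) x := by
  have hd : DifferentiableAt 𝕜 (iteratedDeriv i u) x := by
    rw [iteratedDeriv_eq_iterate]
    exact (hu.iterated_deriv i).differentiableAt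
  simpa only [jet, iteratedDeriv_succ] using hd.hasDerivAt

lemma hasDerivAt_eval_jet (hu : AnalyticAt 𝕜 u x) (q : MvPolynomial ℕ 𝕜) :
    HasDerivAt (fun t => eval (jet u t) q) (eval (jet u x) (totalDeriv 𝕜 q)) x := by
  induction q using MvPolynomial.induction_on with
  | C r => simpa [totalDeriv] using hasDerivAt_const x r
  | add p q hp hq => simpa only [map_add] using hp.fun_add hq
  | mul_X p i hp =>
    convert! hp.mul (hasDerivAt_jet hu i) using 1
    · ext; simp
    · simp only [Derivation.leibniz, totalDeriv_X, map_add, map_mul, eval_X, smul_eq_mul]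
      ring

lemma eventually_eval_jet_iterate_totalDeriv_eq_zero (hu : AnalyticAt 𝕜 u x)
    {q : MvPolynomial ℕ 𝕜} (hq : ∀ᶠ t in 𝓝 x, eval (jet u t) q = 0) (k : ℕ) :
    ∀ᶠ t in 𝓝 x, eval (jet u t) ((totalDeriv 𝕜)^[k] q) = 0 := by
  induction k with
  | zero => exact hq
  | succ k ih =>
    filter_upwards [ih.eventually_nhds, hu.eventually_analyticAt] with t ht hut
    rw [Function.iterate_succ_apply']
    exact (hasDerivAt_eval_jet hut _).unique ((hasDerivAt_const t 0).congr_of_eventuallyEq ht)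

lemma eq_zero_of_eval_jet_generalizedWronskian_ne_zero {J : Type*} [Fintype J] [DecidableEq J]
    {q : J → MvPolynomial ℕ 𝕜} {k : J → ℕ} (hu : AnalyticAt 𝕜 u x)
    (hW : eval (jet u x) (generalizedWronskian q k) ≠ 0) {c : J → 𝕜}
    (hc : ∀ᶠ t in 𝓝 x, ∑ j, c j * eval (jet u t) (q j) = 0) : c = 0 := by
  rw [eval_generalizedWronskian] at hW
  refine Matrix.eq_zero_of_mulVec_eq_zero hW (funext fun i => ?_)
  have hsum : ∀ᶠ t in 𝓝 x, eval (jet u t) (∑ j, c j • q j) = 0 := by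
    simpa only [map_sum, smul_eval] using hc
  have hrow := (eventually_eval_jet_iterate_totalDeriv_eq_zero hu hsum (k i)).self_of_nhds
  rw [eval_iterate_totalDeriv_sum_smul] at hrow
  simpa only [Matrix.mulVec, dotProduct, Matrix.of_apply, mul_comm, Pi.zero_apply] using hrow

end Jet

lemma exists_rename_fin_val_eq {R : Type*} [CommSemiring R] (q : MvPolynomial ℕ R) :
    ∃ (h : ℕ) (p : MvPolynomial (Fin (h + 1)) R), rename Fin.val p = q :=
  ⟨q.vars.sup id, exists_rename_eq_of_vars_subset_range q _ Fin.val_injective fun i hi =>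
    ⟨⟨i, Nat.lt_succ_of_le (Finset.le_sup (f := id) hi)⟩, rfl⟩⟩

lemma eval_sumElim {R σ τ : Type*} [CommSemiring R] (f : σ → R) (g : τ → R)
    (p : MvPolynomial (σ ⊕ τ) R) :
    eval (Sum.elim f g) p
      = eval g (map (eval f) (commAlgEquiv R σ τ (sumAlgEquiv R σ τ p))) := by
  induction p using MvPolynomial.induction_on with
  | C r => simp
  | add p q hp hq => simp only [map_add, hp, hq]
  | mul_X p i hp => cases i <;> simp [hp]

lemma eval_map_eq_sum_monomial {R S σ : Type*} [CommSemiring R] [CommSemiring S] (φ : R →+* S)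
    (a : σ → S) (p : MvPolynomial σ R) :
    eval a (map φ p) = ∑ e ∈ p.support, φ (coeff e p) * eval a (monomial e 1) := by
  simp only [eval_map, eval₂_eq, eval_monomial, one_mul, Finsupp.prod]

theorem nonzero_poly_nonvanishing_general {𝕜 σ : Type*} [NontriviallyNormedField 𝕜]
    [CompleteSpace 𝕜] [CharZero 𝕜] {n : ℕ} {P : MvPolynomial (σ ⊕ Fin n) 𝕜} (hP : P ≠ 0) :
    ∃ R : MvPolynomial σ 𝕜, R ≠ 0 ∧
      ∃ (h : ℕ) (W : MvPolynomial (Fin (h + 1)) 𝕜), W ≠ 0 ∧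
        ∀ θ : σ → 𝕜, eval θ R ≠ 0 →
          ∀ (x : 𝕜) (u : 𝕜 → 𝕜), AnalyticAt 𝕜 u x →
            eval (fun i : Fin (h + 1) => iteratedDeriv (i : ℕ) u x) W ≠ 0 →
              ¬ ∀ᶠ t in nhds x,
                  eval (Sum.elim θ fun i : Fin n => iteratedDeriv (i : ℕ) u t) P = 0 := by
  classical
  have : Uncountable 𝕜 := Cardinal.aleph0_lt_mk_iff.mp <|
    Cardinal.aleph0_lt_continuum.trans_le (continuum_le_cardinal_of_nontriviallyNormedField 𝕜)
  let T : MvPolynomial (Fin n) (MvPolynomial σ 𝕜) :=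
    commAlgEquiv 𝕜 σ (Fin n) (sumAlgEquiv 𝕜 σ (Fin n) P)
  let m (e : T.support) : MvPolynomial (Fin n) 𝕜 := monomial e 1
  have hT : T ≠ 0 := by simpa only [T, ne_eq, EmbeddingLike.map_eq_zero_iff] using hP
  obtain ⟨e, he⟩ := MvPolynomial.ne_zero_iff.mp hT
  have hm : LinearIndependent 𝕜 m :=
    (basisMonomials (Fin n) 𝕜).linearIndependent.comp _ Subtype.val_injective
  obtain ⟨k, hk⟩ := exists_generalizedWronskian_ne_zero hm
  obtain ⟨h, W, hW⟩ := exists_rename_fin_val_eq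
    (generalizedWronskian (fun e => rename Fin.val (m e)) k)
  refine ⟨coeff e T, he, h, W, ?_, fun θ hθ x u hu hWu hPu => hθ ?_⟩
  · rintro rfl
    exact hk (by rw [← hW, map_zero])
  have hc : (fun e : T.support => eval θ (coeff e T)) = 0 := by
    refine eq_zero_of_eval_jet_generalizedWronskian_ne_zero hu (by rwa [← hW, eval_rename]) ?_
    filter_upwards [hPu] with t ht
    rw [eval_sumElim, eval_map_eq_sum_monomial, ← Finset.sum_coe_sort] at ht
    simp only [m, eval_rename]
    exact ht
  exact congrFun hc ⟨e, mem_support_iff.mpr he⟩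

/-- Lemma 3 (lem:nonzero_poly): for a nonzero polynomial
`P ∈ ℂ[θ₁,…,θ_s, u₀,…,u_N]` there are nonempty Zariski open sets of parameter values
and of analytic input functions (the latter cut out by a nonzero polynomial `W` in the
first `h+1` Taylor coefficients) on which
`t ↦ P(θ̂, û(t), û'(t), …, û^{(N)}(t))` is a nonzero germ of analytic function at `0`. -/
theorem nonzero_poly_nonvanishing (s N : ℕ)
    (P : MvPolynomial (Fin s ⊕ Fin (N + 1)) ℂ) (hP : P ≠ 0) :
    ∃ R : MvPolynomial (Fin s) ℂ, R ≠ 0 ∧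
      ∃ (h : ℕ) (W : MvPolynomial (Fin (h + 1)) ℂ), W ≠ 0 ∧
        ∀ θ : Fin s → ℂ, eval θ R ≠ 0 →
          ∀ u : ℂ → ℂ, AnalyticAt ℂ u 0 →
            eval (fun i : Fin (h + 1) => iteratedDeriv (i : ℕ) u 0) W ≠ 0 →
              ¬ (∀ᶠ t in nhds (0 : ℂ),
                  eval (Sum.elim θ (fun i : Fin (N + 1) => iteratedDeriv (i : ℕ) u t)) P
                    = 0) := by
  obtain ⟨R, hR, h, W, hW, hne⟩ := nonzero_poly_nonvanishing_general hP
  exact ⟨R, hR, h, W, hW, fun θ hθ => hne θ hθ 0⟩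
end

section
/- Let K be a field of characteristic zero equipped with a derivation δ, let F ⊆ K₀ ⊆ K be subfields such that K₀ has finite transcendence degree over F, and let u ∈ K be an element such that (i) δ(b) lies in the subfield K₀(u) generated by K₀ and u, for every b ∈ K₀, and (ii) the family (δ^h(u))_{h ∈ ℕ} of iterated derivatives of u is algebraically independent over F. Then the family (δ^h(u))_{h ∈ ℕ} is algebraically independent over K₀. -/
/-!
Suppose the derivatives of `u` are dependent over `K₀`. Then some `δ^[h] u` is algebraic over
`K₀(u, …, δ^[h-1] u)`. Let `a` be a finite family in `K₀` such that `K₀` is algebraic over `F(a)`,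
and let `M` be the algebraic closure of `F(a, u, …, δ^[h-1] u)` in `K`. It contains `K₀` and
`δ^[h] u`, and also `u`, hence `δ(K₀) ⊆ K₀(u) ⊆ M`. So `δ` sends the generators of
`F(a, u, …, δ^[h-1] u)` into `M`, and since a derivation is determined along separable algebraic
extensions, `δ(M) ⊆ M`. Consequently `M` contains all the derivatives of `u`. These are infinitely
many elements algebraically independent over `F`, but `M` has finite transcendence degree over `F`.
-/

section AlgebraicIndependence

variable {R A : Type*} [CommRing R] [CommRing A] [Algebra R A]

theorem algebraicIndependent_of_transcendental_adjoin_Iio {ι : Type*} [LinearOrder ι] {v : ι → A}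
    (hinj : Function.Injective (algebraMap R A))
    (hv : ∀ i, Transcendental (Algebra.adjoin R (v '' Set.Iio i)) (v i)) :
    AlgebraicIndependent R v := by
  have indepOn_finset (s : Finset ι) : AlgebraicIndepOn R v (s : Set ι) := by
    induction s using Finset.induction_on_max with
    | empty =>
      rw [Finset.coe_empty]
      exact algebraicIndependent_empty_type_iff.mpr hinj
    | insert i s hlt ih =>
      rw [Finset.coe_insert]
      exact ih.insert <| (hv i).of_tower_top_of_subalgebra_le <|
        Algebra.adjoin_mono (Set.image_mono hlt)
  exact algebraicIndependent_of_finite_type fun t ht ↦ by simpa using indepOn_finset ht.toFinset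

theorem encard_le_of_algebraicIndepOn_of_isAlgebraic_adjoin [IsDomain A] [FaithfulSMul R A]
    {s t : Set A} (hs : AlgebraicIndepOn R id s)
    (hst : ∀ x ∈ s, IsAlgebraic (Algebra.adjoin R t) x) : s.encard ≤ t.encard := by
  let matroid := AlgebraicIndependent.matroid R A
  have subset_closure : s ⊆ matroid.closure t := by
    rwa [AlgebraicIndependent.matroid_closure_eq]
  calc s.encard ≤ matroid.eRk (matroid.closure t) :=
        (AlgebraicIndependent.matroid_indep_iff.mpr hs).encard_le_eRk_of_subset subset_closure
    _ = matroid.eRk t := matroid.eRk_closure_eq t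
    _ ≤ t.encard := matroid.eRk_le_encard t

end AlgebraicIndependence

section AlgClosureAdjoin

open IntermediateField

variable {F K : Type*} [Field F] [Field K] [Algebra F K] {t : Set K}

variable (F t) in
/-- The relative algebraic closure in `K` of the subfield `F(t)` generated by `t`, as an extension
of `F` rather than of `F(t)`, so that its transcendence degree over `F` can be compared with the
cardinality of `t`. -/
def algClosureAdjoin : IntermediateField F K :=
  (algebraicClosure (adjoin F t) K).restrictScalars F

theorem mem_algClosureAdjoin_iff {x : K} :
    x ∈ algClosureAdjoin F t ↔ IsAlgebraic (adjoin F t) x :=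
  mem_algebraicClosure_iff

theorem subset_algClosureAdjoin : t ⊆ algClosureAdjoin F t := fun _ hx ↦
  mem_algClosureAdjoin_iff.mpr (isAlgebraic_algebraMap (⟨_, subset_adjoin F t hx⟩ : adjoin F t))

theorem mem_algClosureAdjoin_of_isAlgebraic {R : Type*} [CommRing R] [Algebra R K]
    [FaithfulSMul R K] (hR : ∀ r : R, algebraMap R K r ∈ algClosureAdjoin F t) {x : K}
    (hx : IsAlgebraic R x) : x ∈ algClosureAdjoin F t := by
  let M := algebraicClosure (adjoin F t) K
  let toM : R →+* M := (algebraMap R K).codRestrict M hR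
  have toM_injective : Function.Injective toM := fun _ _ h ↦
    FaithfulSMul.algebraMap_injective R K (congrArg Subtype.val h)
  have isAlgebraic_M : IsAlgebraic M x :=
    hx.ringHom_of_comp_eq toM (RingHom.id K) toM_injective rfl
  exact mem_algebraicClosure_iff'.mpr (isIntegral_trans x isAlgebraic_M.isIntegral)

theorem mem_algClosureAdjoin_of_isAlgebraic_adjoin {R : Type*} [CommRing R] [Algebra R K]
    (hR : ∀ r : R, algebraMap R K r ∈ algClosureAdjoin F t) {s : Set K}
    (hs : s ⊆ algClosureAdjoin F t) {x : K} (hx : IsAlgebraic (Algebra.adjoin R s) x) :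
    x ∈ algClosureAdjoin F t := by
  have closure_le : Subring.closure (Set.range (algebraMap R K) ∪ s) ≤
      (algClosureAdjoin F t).toSubring :=
    Subring.closure_le.mpr (Set.union_subset (Set.range_subset_iff.mpr hR) hs)
  exact mem_algClosureAdjoin_of_isAlgebraic
    (fun r ↦ closure_le (Algebra.mem_adjoin_iff.mp r.2)) hx

theorem finite_of_algebraicIndependent_of_mem_algClosureAdjoin {ι : Type*} {v : ι → K}
    (hv : AlgebraicIndependent F v) (ht : t.Finite) (hvt : ∀ i, v i ∈ algClosureAdjoin F t) :
    Finite ι := by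
  have encard_le : (Set.range v).encard ≤ t.encard :=
    encard_le_of_algebraicIndepOn_of_isAlgebraic_adjoin hv.to_subtype_range <|
      Set.forall_mem_range.mpr fun i ↦
        isAlgebraic_adjoin_iff.mp (mem_algClosureAdjoin_iff.mp (hvt i))
  exact (Set.finite_range_iff hv.injective).mp (ht.finite_of_encard_le encard_le)

end AlgClosureAdjoin

section Derivation

theorem exists_derivation_coe_eq {A : Type*} [CommRing A] {δ : A → A}
    (hadd : ∀ a b, δ (a + b) = δ a + δ b) (hmul : ∀ a b, δ (a * b) = δ a * b + a * δ b) :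
    ∃ d : Derivation ℤ A A, ⇑d = δ :=
  ⟨Derivation.mk' (AddMonoidHom.mk' δ hadd).toIntLinearMap fun a b ↦ by
    simpa [mul_comm, add_comm] using hmul a b, rfl⟩

open Polynomial in
theorem derivation_apply_eq_zero_of_isSeparable {R N L V : Type*} [CommRing R] [Field N] [Field L]
    [Algebra R L] [Algebra N L] [AddCommGroup V] [Module R V] [Module L V]
    (d : Derivation R L V) (hd : ∀ c : N, d (algebraMap N L c) = 0) {x : L}
    (hx : IsSeparable N x) : d x = 0 := by
  let := Module.compHom V (algebraMap N L)
  have map_smul (c : N) (y : L) : d (c • y) = c • d y := by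
    rw [Algebra.smul_def, d.leibniz, hd, smul_zero, add_zero]
    rfl
  let dOverN : Derivation N L V := Derivation.mk' { d with map_smul' := map_smul } d.leibniz
  have chain_rule : aeval x (derivative (minpoly N x)) • d x = 0 :=
    calc aeval x (derivative (minpoly N x)) • d x = dOverN (aeval x (minpoly N x)) :=
          (dOverN.map_aeval (minpoly N x) x).symm
      _ = 0 := by rw [minpoly.aeval, map_zero]
  exact (smul_eq_zero.mp chain_rule).resolve_left
    (hx.aeval_derivative_ne_zero (minpoly.aeval N x))

open IntermediateField

variable {F K : Type*} [Field F] [Field K] [Algebra F K]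

theorem derivation_mem_of_isSeparable (δ : Derivation ℤ K K) (M : IntermediateField F K)
    [Algebra.IsSeparable F M] (hF : ∀ c : F, δ (algebraMap F K c) ∈ M) {x : K} (hx : x ∈ M) :
    δ x ∈ M := by
  -- Composed with `K → K ⧸ M`, the derivation `δ` vanishes on `F`, hence on `M`.
  let toQuotient := (LinearMap.range (Algebra.linearMap M K)).mkQ
  let d : Derivation ℤ M (K ⧸ LinearMap.range (Algebra.linearMap M K)) :=
    toQuotient.compDer (δ.compAlgebraMap M)
  have d_eq_zero_iff (y : M) : d y = 0 ↔ δ y ∈ M := by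
    simp [d, toQuotient]
  exact (d_eq_zero_iff ⟨x, hx⟩).mp <| derivation_apply_eq_zero_of_isSeparable d
    (fun c : F ↦ (d_eq_zero_iff _).mpr (hF c)) (Algebra.IsSeparable.isSeparable F _)

theorem derivation_mem_of_mem_adjoin (δ : Derivation ℤ K K) {M : IntermediateField F K}
    (hF : ∀ c : F, δ (algebraMap F K c) ∈ M) {t : Set K} (htM : t ⊆ M) (ht : ∀ x ∈ t, δ x ∈ M)
    {x : K} (hx : x ∈ adjoin F t) : δ x ∈ M := by
  have mem_M {y : K} (hy : y ∈ adjoin F t) : y ∈ M := adjoin_le_iff.mpr htM hy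
  induction hx using adjoin_induction with
  | mem y hy => exact ht y hy
  | algebraMap c => exact hF c
  | add y z _ _ hy hz => rw [map_add]; exact add_mem hy hz
  | inv y hyt hy =>
    rw [δ.leibniz_inv]
    exact mul_mem (neg_mem (pow_mem (inv_mem (mem_M hyt)) 2)) hy
  | mul y z hyt hzt hy hz =>
    rw [δ.leibniz]
    exact add_mem (mul_mem (mem_M hyt) hz) (mul_mem (mem_M hzt) hy)

theorem derivation_mem_algClosureAdjoin [CharZero K] (δ : Derivation ℤ K K) {t : Set K}
    (hF : ∀ c : F, δ (algebraMap F K c) ∈ algClosureAdjoin F t)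
    (ht : ∀ x ∈ t, δ x ∈ algClosureAdjoin F t) {x : K} (hx : x ∈ algClosureAdjoin F t) :
    δ x ∈ algClosureAdjoin F t := by
  have : CharZero (adjoin F t) := (adjoin F t).toSubfield.subtype.charZero
  have adjoin_mem (c : adjoin F t) : δ c ∈ algClosureAdjoin F t :=
    derivation_mem_of_mem_adjoin δ hF subset_algClosureAdjoin ht c.2
  rw [mem_algClosureAdjoin_iff, ← mem_algebraicClosure_iff] at hx ⊢
  exact derivation_mem_of_isSeparable δ _ adjoin_mem hx

end Derivation

/-- Lemma 6 (lem:fields_intersection), abstract form: let `K` be a field of characteristic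
zero with a derivation `δ`, `F ⊆ K₀ ⊆ K` subfields with `K₀` of finite transcendence degree
over `F`, and `u ∈ K` such that `δ(b) ∈ K₀(u)` for all `b ∈ K₀` and the iterated derivatives
`(δ^h(u))_h` are algebraically independent over `F`.  Then `(δ^h(u))_h` are algebraically
independent over `K₀`. -/
theorem iterated_derivatives_algebraically_independent
    {K : Type*} [Field K] [CharZero K]
    (δ : K → K)
    (hδadd : ∀ a b : K, δ (a + b) = δ a + δ b)
    (hδmul : ∀ a b : K, δ (a * b) = δ a * b + a * δ b)
    (F K₀ : Subfield K) (hFK₀ : F ≤ K₀)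
    (htrdeg : ∃ (n : ℕ) (a : Fin n → K), (∀ i, a i ∈ K₀) ∧
      ∀ x ∈ K₀, IsAlgebraic (↥(Subfield.closure ((F : Set K) ∪ Set.range a))) x)
    (u : K)
    (hder : ∀ b ∈ K₀, δ b ∈ Subfield.closure ((K₀ : Set K) ∪ {u}))
    (hindep : AlgebraicIndependent (↥F) (fun h : ℕ => δ^[h] u)) :
    AlgebraicIndependent (↥K₀) (fun h : ℕ => δ^[h] u) := by
  obtain ⟨δ, rfl⟩ := exists_derivation_coe_eq hδadd hδmul
  obtain ⟨n, a, ha, hK₀alg⟩ := htrdeg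
  refine algebraicIndependent_of_transcendental_adjoin_Iio Subtype.val_injective fun h hh ↦ ?_
  let t : Set K := Set.range a ∪ (δ^[·] u) '' Set.Iio h
  let M := algClosureAdjoin F t
  have ⟨range_a_subset, iterate_subset⟩ : Set.range a ⊆ M ∧ (δ^[·] u) '' Set.Iio h ⊆ M :=
    Set.union_subset_iff.mp subset_algClosureAdjoin
  have hF : F ≤ M.toSubfield := fun c hc ↦ M.algebraMap_mem ⟨c, hc⟩
  have hK₀ : K₀ ≤ M.toSubfield := fun x hx ↦ mem_algClosureAdjoin_of_isAlgebraic
    (fun r ↦ Subfield.closure_le.mpr (Set.union_subset hF range_a_subset) r.2) (hK₀alg x hx)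
  have iterate_mem (i : ℕ) (hi : i ≤ h) : δ^[i] u ∈ M := by
    rcases hi.lt_or_eq with hlt | rfl
    · exact iterate_subset ⟨i, hlt, rfl⟩
    · exact mem_algClosureAdjoin_of_isAlgebraic_adjoin (fun c ↦ hK₀ c.2) iterate_subset hh
  have hδK₀ (b : K) (hb : b ∈ K₀) : δ b ∈ M := Subfield.closure_le.mpr
    (Set.union_subset hK₀ (Set.singleton_subset_iff.mpr (iterate_mem 0 h.zero_le))) (hder b hb)
  have hδF (c : F) : δ (algebraMap F K c) ∈ M := hδK₀ c (hFK₀ c.2)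
  have hδt : ∀ x ∈ t, δ x ∈ M := by
    rintro _ (⟨i, rfl⟩ | ⟨i, hi, rfl⟩)
    · exact hδK₀ _ (ha i)
    · simpa only [Function.iterate_succ_apply'] using iterate_mem (i + 1) hi
  have hδM : Set.MapsTo δ M M := fun _ ↦ derivation_mem_algClosureAdjoin δ hδF hδt
  have ht : t.Finite := (Set.finite_range a).union ((Set.finite_Iio h).image _)
  have := finite_of_algebraicIndependent_of_mem_algClosureAdjoin hindep ht fun k ↦
    hδM.iterate k (iterate_mem 0 h.zero_le)
  exact not_finite ℕ
end

section
/- Let F ⊆ K₀ ⊆ K be fields such that K₀ has finite transcendence degree d over F, and let (a_h)_{h ∈ ℕ} be a family of elements of K that is algebraically independent over F. Then the set H := { h ∈ ℕ : a_h is algebraic over the subfield K₀(a₀, …, a_{h−1}) generated by K₀ and a₀,…,a_{h−1} } has at most d elements; in particular H is finite. -/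
/-!
Work in the matroid on `K` of algebraic independence over `F`, whose closure operator is relative
algebraic closure. Let `B` be a transcendence basis of `K₀` over `F`, and let `H` be the set of
those `h` for which `a h` lies in the closure of `B` together with the `a i`, `i < h`. By
well-founded induction, `B` and `{a h | h ∉ H}` together span the whole family `a`. After
contracting `{a h | h ∉ H}`, the set `{a h | h ∈ H}` is therefore spanned by `B`; it is also still
independent, because `a` is, so it has at most as many elements as `B`.
-/

open Set

section Matroid

open scoped Matroid

variable {α ι : Type*} (M : Matroid α)

lemma eRk_contract_le (C X : Set α) : (M ／ C).eRk X ≤ M.eRk X :=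
  Matroid.eRk_le_iff.mpr fun _ hIX hI ↦ hI.of_contract.encard_le_eRk_of_subset hIX

variable {M}

lemma encard_sdiff_le_eRk_of_subset_closure_union {I C B : Set α} (hI : M.Indep I) (hCI : C ⊆ I)
    (hspan : I ⊆ M.closure (B ∪ C)) : (I \ C).encard ≤ M.eRk B := by
  have hspan' : I \ C ⊆ (M ／ C).closure B := by
    rw [Matroid.contract_closure_eq]
    exact sdiff_subset_sdiff_left hspan
  calc (I \ C).encard
      ≤ (M ／ C).eRk ((M ／ C).closure B) :=
        (hI.diff_indep_contract_of_subset hCI).encard_le_eRk_of_subset hspan'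
    _ = (M ／ C).eRk B := Matroid.eRk_closure_eq ..
    _ ≤ M.eRk B := eRk_contract_le M C B

lemma range_subset_closure_union_image_notMem_closure [Preorder ι] [WellFoundedLT ι] {a : ι → α}
    (ha : range a ⊆ M.E) (B : Set α) :
    range a ⊆ M.closure (B ∪ a '' {h | a h ∉ M.closure (B ∪ a '' Iio h)}) := by
  set C := a '' {h | a h ∉ M.closure (B ∪ a '' Iio h)}
  rintro _ ⟨h, rfl⟩
  induction h using WellFoundedLT.induction with
  | ind h ih =>
    by_cases hh : a h ∈ M.closure (B ∪ a '' Iio h)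
    · have hpred : a '' Iio h ⊆ M.closure (B ∪ C) := image_subset_iff.mpr ih
      have hle : M.closure (B ∪ a '' Iio h) ⊆ M.closure (B ∪ C) := calc
        M.closure (B ∪ a '' Iio h) ⊆ M.closure (B ∪ M.closure (B ∪ C)) :=
          M.closure_subset_closure (union_subset_union_right B hpred)
        _ = M.closure (B ∪ C) := by
          rw [M.closure_union_closure_right_eq, ← union_assoc, union_self]
      exact hle hh
    · exact M.mem_closure_of_mem' (.inr (mem_image_of_mem a hh)) (ha (mem_range_self h))

theorem encard_setOf_mem_closure_union_image_Iio_le_eRk [Preorder ι] [WellFoundedLT ι] {a : ι → α}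
    (ha : a.Injective) (hind : M.Indep (range a)) (B : Set α) :
    {h | a h ∈ M.closure (B ∪ a '' Iio h)}.encard ≤ M.eRk B := by
  set H := {h | a h ∈ M.closure (B ∪ a '' Iio h)}
  calc H.encard
      = (a '' H).encard := (ha.encard_image H).symm
    _ = (range a \ a '' Hᶜ).encard := by rw [← image_compl_eq_range_sdiff_image ha, compl_compl]
    _ ≤ M.eRk B := encard_sdiff_le_eRk_of_subset_closure_union hind (image_subset_range a Hᶜ)
        (range_subset_closure_union_image_notMem_closure hind.subset_ground B)

end Matroid

section Field

lemma mem_matroid_closure_iff_isAlgebraic_adjoin {F K : Type*} [Field F] [Field K] [Algebra F K]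
    {S : Set K} {x : K} :
    x ∈ (AlgebraicIndependent.matroid F K).closure S ↔
      IsAlgebraic (IntermediateField.adjoin F S) x := by
  rw [AlgebraicIndependent.matroid_closure_eq, SetLike.mem_coe, Subalgebra.mem_algebraicClosure,
    IntermediateField.isAlgebraic_adjoin_iff]

variable {K : Type*} [Field K]

lemma mem_matroid_closure_iff_isAlgebraic_subfieldClosure {F : Subfield K} {S : Set K} {x : K} :
    x ∈ (AlgebraicIndependent.matroid F K).closure S ↔
      IsAlgebraic (Subfield.closure ((F : Set K) ∪ S)) x := by
  have hF : range (algebraMap F K) = F := Subtype.range_coe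
  rw [mem_matroid_closure_iff_isAlgebraic_adjoin, ← hF, ← IntermediateField.adjoin_toSubfield]
  rfl

lemma isAlgebraic_of_subfield_le {L L' : Subfield K} (hL : L ≤ L') {x : K} (hx : IsAlgebraic L x) :
    IsAlgebraic L' x :=
  hx.ringHom_of_comp_eq (Subfield.inclusion hL) (RingHom.id K) (Subfield.inclusion hL).injective rfl

theorem algebraic_indices_finite_general {ι : Type*} [Preorder ι] [WellFoundedLT ι]
    (F K₀ : Subfield K) (B : Set K)
    (hB : ∀ x ∈ K₀, IsAlgebraic (Subfield.closure ((F : Set K) ∪ B)) x)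
    (a : ι → K) (hindep : AlgebraicIndependent F a) :
    {h : ι | IsAlgebraic (Subfield.closure ((K₀ : Set K) ∪ a '' Iio h)) (a h)}.encard ≤
      B.encard := by
  let M := AlgebraicIndependent.matroid F K
  have hK₀ : (K₀ : Set K) ⊆ M.closure B := fun x hx ↦
    mem_matroid_closure_iff_isAlgebraic_subfieldClosure.mpr (hB x hx)
  have hH : {h : ι | IsAlgebraic (Subfield.closure ((K₀ : Set K) ∪ a '' Iio h)) (a h)} ⊆
      {h | a h ∈ M.closure (K₀ ∪ a '' Iio h)} := fun h hh ↦
    mem_matroid_closure_iff_isAlgebraic_subfieldClosure.mpr <|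
      isAlgebraic_of_subfield_le (Subfield.closure_mono subset_union_right) hh
  have hind : M.Indep (range a) := AlgebraicIndependent.matroid_indep_iff.mpr hindep.coe_range
  calc _ ≤ {h | a h ∈ M.closure (K₀ ∪ a '' Iio h)}.encard := encard_le_encard hH
    _ ≤ M.eRk K₀ := encard_setOf_mem_closure_union_image_Iio_le_eRk hindep.injective hind K₀
    _ ≤ M.eRk (M.closure B) := M.eRk_mono hK₀
    _ = M.eRk B := M.eRk_closure_eq B
    _ ≤ B.encard := M.eRk_le_encard B

end Field

/-- First Claim in the proof of Lemma 6 (lem:fields_intersection): if `F ⊆ K₀ ⊆ K` are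
fields with `K₀` of transcendence degree `d` over `F` (witnessed by a transcendence basis
`b : Fin d → K` of `K₀` over `F`), and `(a_h)_{h∈ℕ}` is a family of elements of `K`
algebraically independent over `F`, then the set
`H = { h | a_h is algebraic over K₀(a₀,…,a_{h−1}) }` has at most `d` elements;
in particular `H` is finite. -/
theorem algebraic_indices_finite
    {K : Type*} [Field K]
    (F K₀ : Subfield K) (hFK₀ : F ≤ K₀) (d : ℕ)
    (htrdeg : ∃ b : Fin d → K, (∀ i, b i ∈ K₀) ∧ AlgebraicIndependent (↥F) b ∧
      ∀ x ∈ K₀, IsAlgebraic (↥(Subfield.closure ((F : Set K) ∪ Set.range b))) x)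
    (a : ℕ → K) (hindep : AlgebraicIndependent (↥F) a) :
    {h : ℕ | IsAlgebraic (↥(Subfield.closure ((K₀ : Set K) ∪ (a '' Set.Iio h)))) (a h)}.Finite ∧
    {h : ℕ | IsAlgebraic (↥(Subfield.closure ((K₀ : Set K) ∪ (a '' Set.Iio h)))) (a h)}.ncard
      ≤ d := by
  obtain ⟨b, -, -, halg⟩ := htrdeg
  have hb : (range b).encard ≤ d := by simpa [image_univ] using encard_image_le b univ
  exact encard_le_coe_iff_finite_ncard_le.mp
    ((algebraic_indices_finite_general F K₀ (range b) halg a hindep).trans hb)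
end
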